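/- Let u be a pair potential that is stable with constant B ≥ 0 and regular, let Λ ⊂ ℝ^d be bounded and measurable, and assume Ξ_Λ(z) ≠ 0 for all |z| < z₀. Then for every z ∈ ℂ with |z| < z₀ the family (θ_Λ^{(n)}(z;·))_{n≥1} satisfies the finite-volume Kirkwood–Salsburg equations: for all x ∈ Λ, θ_Λ^{(1)}(z; x) = z ( 1 + Σ_{k≥1} (1/k!) ∫_{Λ^k} Π_{j=1}^k f_β(x − y_j) · θ_Λ^{(k)}(z; y_1,…,y_k) dy_1⋯dy_k ), and for all n ≥ 1 and x, x_1,…,x_n ∈ Λ, θ_Λ^{(n+1)}(z; x, x_1,…,x_n) = z e^{−β Σ_{i=1}^n u(x − x_i)} ( θ_Λ^{(n)}(z; x_1,…,x_n) + Σ_{k≥1} (1/k!) ∫_{Λ^k} Π_{j=1}^k f_β(x − y_j) · θ_Λ^{(n+k)}(z; x_1,…,x_n, y_1,…,y_k) dy_1⋯dy_k ), all series converging absolutely. -/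

import Mathlib

open MeasureTheory Bornology

noncomputable section

/-- Boltzmann factor `e^{-β t}` with the convention `e^{-β(+∞)} = 0`. -/
def boltz (β : ℝ) (t : EReal) : ℝ :=
  if t = ⊤ then 0 else Real.exp (-β * t.toReal)

/-- Hamiltonian of a pair potential: `H(x₁,…,xₙ) = ∑_{i<j} u(xᵢ - xⱼ)`. -/
def Ham {d : ℕ} (u : (Fin d → ℝ) → EReal) (n : ℕ) (x : Fin n → (Fin d → ℝ)) : EReal :=
  ∑ p ∈ Finset.univ.filter (fun p : Fin n × Fin n => p.1 < p.2), u (x p.1 - x p.2)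

/-- A pair potential: even, measurable, bounded from below. -/
def IsPairPotential {d : ℕ} (u : (Fin d → ℝ) → EReal) : Prop :=
  Measurable u ∧ (∀ x, u (-x) = u x) ∧ ∃ m : ℝ, ∀ x, (m : EReal) ≤ u x

/-- Stability with constant `B`: `H(x₁,…,xₙ) ≥ -Bn`. -/
def IsStable {d : ℕ} (u : (Fin d → ℝ) → EReal) (B : ℝ) : Prop :=
  ∀ (n : ℕ) (x : Fin n → (Fin d → ℝ)), ((-(B * n) : ℝ) : EReal) ≤ Ham u n x

/-- Mayer function `f_β = e^{-βu} - 1`. -/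
def mayer {d : ℕ} (β : ℝ) (u : (Fin d → ℝ) → EReal) (x : Fin d → ℝ) : ℝ :=
  boltz β (u x) - 1

/-- Regularity: the Mayer function is integrable. -/
def IsRegularPP {d : ℕ} (β : ℝ) (u : (Fin d → ℝ) → EReal) : Prop :=
  Integrable (mayer β u)

/-- `C_β(u) = ∫ |e^{-βu} - 1|`. -/
def Creg {d : ℕ} (β : ℝ) (u : (Fin d → ℝ) → EReal) : ℝ :=
  ∫ x, |mayer β u x|

/-- The cartesian power `Λ^k`. -/
def cube {d : ℕ} (Λ : Set (Fin d → ℝ)) (k : ℕ) : Set (Fin k → (Fin d → ℝ)) :=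
  Set.univ.pi fun _ => Λ

/-- Grand canonical partition function `Ξ_Λ(z)`. -/
def Xi {d : ℕ} (β : ℝ) (u : (Fin d → ℝ) → EReal) (Λ : Set (Fin d → ℝ)) (z : ℂ) : ℂ :=
  ∑' k : ℕ, z ^ k / (Nat.factorial k : ℂ) *
    ((∫ y in cube Λ k, boltz β (Ham u k y) : ℝ) : ℂ)

/-- `θ_Λ^{(n)}(z; x₁,…,xₙ)`. -/
def theta {d : ℕ} (β : ℝ) (u : (Fin d → ℝ) → EReal) (Λ : Set (Fin d → ℝ)) (n : ℕ)
    (z : ℂ) (x : Fin n → (Fin d → ℝ)) : ℂ :=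
  (Xi β u Λ z)⁻¹ * ∑' k : ℕ, z ^ (n + k) / (Nat.factorial k : ℂ) *
    ((∫ y in cube Λ k, boltz β (Ham u (n + k) (Fin.append x y)) : ℝ) : ℂ)

end

/-!
Write `G_k(y) = z ^ k * exp (-β H(y₁, …, y_k))`, so that `Ξ θ⁽ⁿ⁾(x) = ∑ₖ 1/k! ∫ G_{n+k}(x, y) dy`.
Isolating the interactions of the particle at `x` gives
`G_{n+1+k}(x, xs, y) = z exp (-β ∑ᵢ u(x - xsᵢ)) ∏ⱼ (1 + f(x - yⱼ)) G_{n+k}(xs, y)`.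
Expand the product over the subsets of the `y`s. By the symmetry of `G`, all `k.choose l` subsets of
size `l` contribute equally, and `k.choose l / k! = 1 / (l! (k - l)!)` turns the series over `k`
into a double series over `(l, k - l)`, whose inner sums reassemble into `Ξ θ⁽ⁿ⁺ˡ⁾(xs, y)`.
Stability and `|Λ| < ∞` bound the double series by a product of two exponential series
for every `z`.
-/

open Finset in
lemma hasSum_sum_antidiagonal {A M : Type*} [AddMonoid A] [HasAntidiagonal A] [AddCommMonoid M]
    [TopologicalSpace M] [ContinuousAdd M] [RegularSpace M] {f : A × A → M} {s : M}
    (hf : HasSum f s) : HasSum (fun n => ∑ p ∈ antidiagonal n, f p) s := by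
  refine (HasAntidiagonal.sigmaAntidiagonalEquivProd.hasSum_iff.mpr hf).sigma fun n => ?_
  rw [← Finset.sum_coe_sort]
  exact hasSum_fintype _

open Finset in
lemma sum_powerset_card_eq_sum_antidiagonal {M : Type*} [AddCommMonoid M] {k : ℕ}
    (f : ℕ → ℕ → M) :
    ∑ t : Finset (Fin k), f #t #tᶜ = ∑ p ∈ antidiagonal k, k.choose p.1 • f p.1 p.2 := by
  simp_rw [card_compl, Fintype.card_fin]
  rw [← powerset_univ, sum_powerset_apply_card fun l => f l (k - l), card_univ, Fintype.card_fin,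
    Nat.sum_antidiagonal_eq_sum_range_succ fun l m => k.choose l • f l m]

lemma norm_prod_le_pow_card {ι 𝕜 : Type*} [NormedField 𝕜] (t : Finset ι) {f : ι → 𝕜} {M : ℝ}
    (hf : ∀ i ∈ t, ‖f i‖ ≤ M) : ‖∏ i ∈ t, f i‖ ≤ M ^ t.card := by
  rw [norm_prod, ← Finset.prod_const]
  exact Finset.prod_le_prod (fun _ _ => norm_nonneg _) hf

section ProductMeasure

variable {X E : Type*} [MeasurableSpace X] (ν : Measure X)

lemma measurable_finAppend {n k : ℕ} :
    Measurable fun p : (Fin n → X) × (Fin k → X) => Fin.append p.1 p.2 := by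
  refine measurable_pi_iff.mpr fun i => ?_
  induction i using Fin.addCases with
  | left i => simp only [Fin.append_left]; fun_prop
  | right i => simp only [Fin.append_right]; fun_prop

variable [NormedAddCommGroup E] [NormedSpace ℝ E]

lemma norm_integral_pi_le [IsFiniteMeasure ν] {k : ℕ} {F : (Fin k → X) → E} {C : ℝ}
    (hF : ∀ y, ‖F y‖ ≤ C) :
    ‖∫ y, F y ∂(Measure.pi fun _ => ν)‖ ≤ C * ν.real Set.univ ^ k := by
  have hvol : (Measure.pi fun _ : Fin k => ν).real Set.univ = ν.real Set.univ ^ k := by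
    simp [Measure.real, Measure.pi_univ]
  exact hvol ▸ norm_integral_le_of_norm_le_const (.of_forall hF)

lemma integral_pi_eq_integral_integral_sumElim [SigmaFinite ν] {ι κ τ : Type*} [Fintype ι]
    [Fintype κ] [Fintype τ] (e : ι ⊕ κ ≃ τ) {F : (τ → X) → E}
    (hF : Integrable F (Measure.pi fun _ => ν)) :
    ∫ y, F y ∂(Measure.pi fun _ => ν) =
      ∫ y₁, ∫ y₂, F (Sum.elim y₁ y₂ ∘ e.symm) ∂(Measure.pi fun _ : κ => ν)
        ∂(Measure.pi fun _ : ι => ν) := by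
  let Φ := (MeasurableEquiv.sumPiEquivProdPi fun _ : ι ⊕ κ => X).symm.trans
    (MeasurableEquiv.piCongrLeft (fun _ => X) e)
  have hΦ : MeasurePreserving Φ
      ((Measure.pi fun _ : ι => ν).prod (Measure.pi fun _ : κ => ν)) (Measure.pi fun _ => ν) :=
    (measurePreserving_piCongrLeft (fun _ : τ => ν) e).comp
      (measurePreserving_sumPiEquivProdPi_symm fun _ : ι ⊕ κ => ν)
  have hΦ_apply (p : (ι → X) × (κ → X)) : Φ p = Sum.elim p.1 p.2 ∘ e.symm := by
    funext i
    obtain ⟨i | i, rfl⟩ := e.surjective i <;>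
      simp [Φ, MeasurableEquiv.piCongrLeft_apply_apply, MeasurableEquiv.sumPiEquivProdPi,
        Equiv.sumPiEquivProdPi]
  rw [← hΦ.integral_comp Φ.measurableEmbedding]
  simp only [← hΦ_apply (_, _)]
  exact integral_prod _ ((hΦ.integrable_comp_emb Φ.measurableEmbedding).mpr hF)

end ProductMeasure

section ConfigurationWeights

open scoped NNReal

variable {X : Type*}

/-- A weight `W`, given by its values `W k` on `k`-point configurations, is symmetric if it does not
depend on the labelling of the points. Allowing `Fin k ≃ Fin l` rather than only permutations lets
the same property absorb casts along equalities `k = l`. -/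
def IsSymmetricWeight (W : ∀ k : ℕ, (Fin k → X) → ℂ) : Prop :=
  ∀ ⦃k l : ℕ⦄ (e : Fin k ≃ Fin l) (y : Fin l → X), W k (y ∘ e) = W l y

/-- The weight `W` of a configuration to which the fixed points `x` are adjoined. -/
def pinned (W : ∀ k : ℕ, (Fin k → X) → ℂ) {n : ℕ} (x : Fin n → X) (k : ℕ) (y : Fin k → X) : ℂ :=
  W (n + k) (Fin.append x y)

variable {W : ∀ k : ℕ, (Fin k → X) → ℂ}

lemma IsSymmetricWeight.sumElim_comp_symm (hW : IsSymmetricWeight W) {k l m : ℕ}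
    (e : Fin l ⊕ Fin m ≃ Fin k) (y₁ : Fin l → X) (y₂ : Fin m → X) :
    W k (Sum.elim y₁ y₂ ∘ e.symm) = pinned W y₁ m y₂ := by
  rw [pinned, ← hW (e.symm.trans finSumFinEquiv)]
  congr 1
  funext i
  obtain ⟨i | i, rfl⟩ := e.surjective i <;> simp

lemma isSymmetricWeight_pinned (hW : IsSymmetricWeight W) {n : ℕ} (x : Fin n → X) :
    IsSymmetricWeight (pinned W x) := by
  intro k l e y
  rw [← hW.sumElim_comp_symm (((Equiv.refl _).sumCongr e).trans finSumFinEquiv)]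
  refine congrArg _ (funext fun i => ?_)
  induction i using Fin.addCases <;> simp

lemma IsSymmetricWeight.pinned_pinned (hW : IsSymmetricWeight W) {n l : ℕ} (x : Fin n → X)
    (y : Fin l → X) : pinned (pinned W x) y = pinned W (Fin.append x y) := by
  funext m y'
  simp only [pinned, Fin.append_assoc]
  exact (hW (finCongr (Nat.add_assoc n l m)) _).symm

lemma IsSymmetricWeight.pinned_of_isEmpty (hW : IsSymmetricWeight W) (x : Fin 0 → X) :
    pinned W x = W := by
  funext k y
  rw [pinned, Subsingleton.elim x Fin.elim0, Fin.elim0_append]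
  exact hW (finCongr (Nat.zero_add k)) y

lemma norm_pinned_le {C A : ℝ≥0} (hW : ∀ k y, ‖W k y‖ ≤ C * A ^ k) {n : ℕ} (x : Fin n → X) (k : ℕ)
    (y : Fin k → X) : ‖pinned W x k y‖ ≤ (C * A ^ n : ℝ≥0) * A ^ k :=
  (hW _ _).trans_eq (by push_cast; ring)

lemma measurable_pinned [MeasurableSpace X] (hW : ∀ k, Measurable (W k)) {n : ℕ} (x : Fin n → X)
    (k : ℕ) : Measurable (pinned W x k) :=
  (hW _).comp (measurable_finAppend.comp (by fun_prop : Measurable fun y => (x, y)))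

section LebesguePoisson

variable [MeasurableSpace X] (ν : Measure X)

/-- The contribution `1/k! ∫ W_k dνᵏ` of the `k`-point configurations to
`lebesguePoissonIntegral ν W`. -/
noncomputable def lebesguePoissonTerm (W : ∀ k : ℕ, (Fin k → X) → ℂ) (k : ℕ) : ℂ :=
  1 / (k.factorial : ℂ) * ∫ y, W k y ∂(Measure.pi fun _ : Fin k => ν)

/-- The integral of the weight `W` over finite configurations of arbitrary size, with respect to the
Lebesgue–Poisson measure of intensity `ν`. For `ν` the Lebesgue measure on `Λ` and `W` a
Gibbs weight this is the grand canonical partition function. -/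
noncomputable def lebesguePoissonIntegral (W : ∀ k : ℕ, (Fin k → X) → ℂ) : ℂ :=
  ∑' k, lebesguePoissonTerm ν W k

lemma lebesguePoissonTerm_const_mul (c : ℂ) :
    lebesguePoissonTerm ν (fun k y => c * W k y) = fun k => c * lebesguePoissonTerm ν W k := by
  funext k
  rw [lebesguePoissonTerm, integral_const_mul, lebesguePoissonTerm, mul_left_comm]

lemma lebesguePoissonIntegral_const_mul (c : ℂ) :
    lebesguePoissonIntegral ν (fun k y => c * W k y) = c * lebesguePoissonIntegral ν W := by
  rw [lebesguePoissonIntegral, lebesguePoissonTerm_const_mul, tsum_mul_left,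
    lebesguePoissonIntegral]

lemma lebesguePoissonTerm_zero : lebesguePoissonTerm ν W 0 = W 0 Fin.elim0 := by
  simp [lebesguePoissonTerm, Measure.pi_of_empty _ Fin.elim0]

lemma measurable_lebesguePoissonTerm_pinned [SigmaFinite ν] (hWm : ∀ k, Measurable (W k))
    (l m : ℕ) :
    Measurable fun y : Fin l → X => lebesguePoissonTerm ν (pinned W y) m :=
  (((hWm (l + m)).comp measurable_finAppend).stronglyMeasurable.integral_prod_right'
    (ν := Measure.pi fun _ : Fin m => ν)).measurable.const_mul _

variable [IsFiniteMeasure ν] {C A : ℝ≥0}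

lemma norm_lebesguePoissonTerm_le {c : ℝ} {k : ℕ} (hW : ∀ y, ‖W k y‖ ≤ c) :
    ‖lebesguePoissonTerm ν W k‖ ≤ c * (ν.real Set.univ ^ k / k.factorial) := by
  rw [lebesguePoissonTerm, norm_mul, norm_div, norm_one, Complex.norm_natCast]
  calc 1 / (k.factorial : ℝ) * ‖∫ y, W k y ∂(Measure.pi fun _ => ν)‖
      ≤ 1 / (k.factorial : ℝ) * (c * ν.real Set.univ ^ k) := by
        gcongr; exact norm_integral_pi_le ν hW
    _ = c * (ν.real Set.univ ^ k / k.factorial) := by ring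

lemma norm_lebesguePoissonTerm_le_of_exp_bound (hW : ∀ k y, ‖W k y‖ ≤ C * A ^ k) (k : ℕ) :
    ‖lebesguePoissonTerm ν W k‖ ≤ C * ((A * ν.real Set.univ) ^ k / k.factorial) :=
  (norm_lebesguePoissonTerm_le ν (hW k)).trans_eq (by ring)

lemma hasSum_lebesguePoissonIntegral (hW : ∀ k y, ‖W k y‖ ≤ C * A ^ k) :
    HasSum (lebesguePoissonTerm ν W) (lebesguePoissonIntegral ν W) :=
  (Summable.of_norm_bounded ((Real.summable_pow_div_factorial _).mul_left _)
    (norm_lebesguePoissonTerm_le_of_exp_bound ν hW)).hasSum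

variable {g : X → ℂ} {M : ℝ≥0}

lemma integrable_prod_mul (hgm : Measurable g) (hg : ∀ x, ‖g x‖ ≤ M)
    (hWm : ∀ k, Measurable (W k)) (hW : ∀ k y, ‖W k y‖ ≤ C * A ^ k) {k : ℕ}
    (t : Finset (Fin k)) :
    Integrable (fun y => (∏ j ∈ t, g (y j)) * W k y) (Measure.pi fun _ => ν) := by
  refine .of_bound (C := M ^ t.card * (C * A ^ k)) (Measurable.aestronglyMeasurable ?_)
    (.of_forall fun y => ?_)
  · exact (Finset.measurable_fun_prod _ fun j _ => hgm.comp (measurable_pi_apply j)).mul (hWm k)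
  · rw [norm_mul]
    gcongr
    exacts [norm_prod_le_pow_card t fun _ _ => hg _, hW k y]

lemma integral_prod_mul_eq (hgm : Measurable g) (hg : ∀ x, ‖g x‖ ≤ M)
    (hWm : ∀ k, Measurable (W k)) (hW : ∀ k y, ‖W k y‖ ≤ C * A ^ k) (hsymm : IsSymmetricWeight W)
    {k : ℕ} (t : Finset (Fin k)) :
    ∫ y, (∏ j ∈ t, g (y j)) * W k y ∂(Measure.pi fun _ => ν) =
      ∫ y, (∏ j, g (y j)) * ∫ y', pinned W y tᶜ.card y' ∂(Measure.pi fun _ => ν)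
        ∂(Measure.pi fun _ : Fin t.card => ν) := by
  let e : Fin t.card ⊕ Fin tᶜ.card ≃ Fin k := finSumEquivOfFinset rfl rfl
  have prod_eq (y₁ : Fin t.card → X) (y₂ : Fin tᶜ.card → X) :
      ∏ j ∈ t, g ((Sum.elim y₁ y₂ ∘ e.symm) j) = ∏ j, g (y₁ j) := by
    calc ∏ j ∈ t, g ((Sum.elim y₁ y₂ ∘ e.symm) j)
        = ∏ j ∈ Finset.univ.map (t.orderEmbOfFin rfl).toEmbedding,
            g ((Sum.elim y₁ y₂ ∘ e.symm) j) := by rw [t.map_orderEmbOfFin_univ rfl]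
      _ = ∏ j, g ((Sum.elim y₁ y₂ ∘ e.symm) (e (Sum.inl j))) := Finset.prod_map _ _ _
      _ = ∏ j, g (y₁ j) := by simp
  rw [integral_pi_eq_integral_integral_sumElim ν e (integrable_prod_mul ν hgm hg hWm hW t)]
  simp_rw [prod_eq, hsymm.sumElim_comp_symm, integral_const_mul]

lemma lebesguePoissonTerm_prod_one_add_mul (hgm : Measurable g) (hg : ∀ x, ‖g x‖ ≤ M)
    (hWm : ∀ k, Measurable (W k)) (hW : ∀ k y, ‖W k y‖ ≤ C * A ^ k) (hsymm : IsSymmetricWeight W)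
    (k : ℕ) :
    lebesguePoissonTerm ν (fun k y => (∏ j, (1 + g (y j))) * W k y) k =
      ∑ p ∈ Finset.HasAntidiagonal.antidiagonal k, lebesguePoissonTerm ν
        (fun _ y => (∏ j, g (y j)) * lebesguePoissonTerm ν (pinned W y) p.2) p.1 := by
  simp_rw [lebesguePoissonTerm, Finset.prod_one_add, Finset.sum_mul]
  rw [integral_finsetSum _ fun t _ => integrable_prod_mul ν hgm hg hWm hW t, Finset.powerset_univ]
  simp_rw [integral_prod_mul_eq ν hgm hg hWm hW hsymm]
  rw [sum_powerset_card_eq_sum_antidiagonal fun l m => ∫ y, (∏ j, g (y j)) *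
    ∫ y', pinned W y m y' ∂(Measure.pi fun _ => ν) ∂(Measure.pi fun _ : Fin l => ν),
    Finset.mul_sum]
  refine Finset.sum_congr rfl fun p hp => ?_
  obtain rfl := Finset.HasAntidiagonal.mem_antidiagonal.mp hp
  simp_rw [mul_left_comm _ (1 / (p.2.factorial : ℂ)), integral_const_mul]
  rw [nsmul_eq_mul, Nat.cast_add_choose]
  have := Nat.cast_ne_zero (R := ℂ).mpr (p.1 + p.2).factorial_ne_zero
  field_simp

lemma norm_prod_mul_lebesguePoissonTerm_pinned_le (hg : ∀ x, ‖g x‖ ≤ M)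
    (hW : ∀ k y, ‖W k y‖ ≤ C * A ^ k) {l : ℕ} (m : ℕ) (y : Fin l → X) :
    ‖(∏ j, g (y j)) * lebesguePoissonTerm ν (pinned W y) m‖ ≤
      C * (M * A) ^ l * ((A * ν.real Set.univ) ^ m / m.factorial) := by
  rw [norm_mul]
  calc ‖∏ j, g (y j)‖ * ‖lebesguePoissonTerm ν (pinned W y) m‖
      ≤ M ^ l * ((C * A ^ l : ℝ≥0) * ((A * ν.real Set.univ) ^ m / m.factorial)) := by
        gcongr
        · simpa using norm_prod_le_pow_card Finset.univ fun j _ => hg (y j)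
        · exact norm_lebesguePoissonTerm_le_of_exp_bound ν (norm_pinned_le hW y) m
    _ = C * (M * A) ^ l * ((A * ν.real Set.univ) ^ m / m.factorial) := by push_cast; ring

lemma summable_lebesguePoissonTerm_prod_mul_pinned (hg : ∀ x, ‖g x‖ ≤ M)
    (hW : ∀ k y, ‖W k y‖ ≤ C * A ^ k) :
    Summable fun p : ℕ × ℕ => lebesguePoissonTerm ν
      (fun _ y => (∏ j, g (y j)) * lebesguePoissonTerm ν (pinned W y) p.2) p.1 := by
  have exp_nonneg (c : ℝ≥0) : 0 ≤ fun k : ℕ => (c * ν.real Set.univ) ^ k / (k.factorial : ℝ) :=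
    fun k => by positivity
  refine .of_norm_bounded (((Real.summable_pow_div_factorial ((M * A : ℝ≥0) * ν.real Set.univ)
    ).mul_of_nonneg (Real.summable_pow_div_factorial (A * ν.real Set.univ))
      (exp_nonneg _) (exp_nonneg _)).mul_left (C : ℝ)) fun ⟨l, m⟩ => ?_
  refine (norm_lebesguePoissonTerm_le ν
    (norm_prod_mul_lebesguePoissonTerm_pinned_le ν hg hW m)).trans_eq ?_
  push_cast
  ring

lemma hasSum_lebesguePoissonTerm_prod_mul_pinned (hgm : Measurable g) (hg : ∀ x, ‖g x‖ ≤ M)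
    (hWm : ∀ k, Measurable (W k)) (hW : ∀ k y, ‖W k y‖ ≤ C * A ^ k) (l : ℕ) :
    HasSum (fun m => lebesguePoissonTerm ν
        (fun _ y => (∏ j, g (y j)) * lebesguePoissonTerm ν (pinned W y) m) l)
      (lebesguePoissonTerm ν
        (fun _ y => (∏ j, g (y j)) * lebesguePoissonIntegral ν (pinned W y)) l) := by
  refine HasSum.mul_left _ (hasSum_integral_of_dominated_convergence
    (fun m _ => C * (M * A) ^ l * ((A * ν.real Set.univ) ^ m / m.factorial))
    (fun m => Measurable.aestronglyMeasurable ?_)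
    (fun m => .of_forall (norm_prod_mul_lebesguePoissonTerm_pinned_le ν hg hW m))
    (.of_forall fun _ => (Real.summable_pow_div_factorial _).mul_left _) (integrable_const _)
    (.of_forall fun y => (hasSum_lebesguePoissonIntegral ν (norm_pinned_le hW y)).mul_left _))
  exact (Finset.measurable_fun_prod _ fun j _ => hgm.comp (measurable_pi_apply j)).mul
    (measurable_lebesguePoissonTerm_pinned ν hWm l m)

theorem hasSum_lebesguePoissonIntegral_prod_one_add_mul (hgm : Measurable g)
    (hg : ∀ x, ‖g x‖ ≤ M) (hWm : ∀ k, Measurable (W k)) (hW : ∀ k y, ‖W k y‖ ≤ C * A ^ k)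
    (hsymm : IsSymmetricWeight W) :
    HasSum (lebesguePoissonTerm ν
        fun _ y => (∏ j, g (y j)) * lebesguePoissonIntegral ν (pinned W y))
      (lebesguePoissonIntegral ν fun _ y => (∏ j, (1 + g (y j))) * W _ y) := by
  have double_sum := (summable_lebesguePoissonTerm_prod_mul_pinned ν hg hW).hasSum
  have by_total_size := hasSum_sum_antidiagonal double_sum
  simp_rw [← lebesguePoissonTerm_prod_one_add_mul ν hgm hg hWm hW hsymm] at by_total_size
  rw [lebesguePoissonIntegral, by_total_size.tsum_eq]
  exact double_sum.prod_fiberwise (hasSum_lebesguePoissonTerm_prod_mul_pinned ν hgm hg hWm hW)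

end LebesguePoisson

end ConfigurationWeights

section Boltzmann

variable {β : ℝ}

lemma boltz_zero : boltz β 0 = 1 := by simp [boltz]

lemma boltz_nonneg (t : EReal) : 0 ≤ boltz β t := by
  unfold boltz; split_ifs <;> positivity

lemma boltz_le_exp (hβ : 0 ≤ β) {t : EReal} {c : ℝ} (hc : (c : EReal) ≤ t) :
    boltz β t ≤ Real.exp (-β * c) := by
  unfold boltz
  split_ifs with ht
  · positivity
  · exact Real.exp_le_exp.mpr (mul_le_mul_of_nonpos_left
      (EReal.coe_le_coe_iff.mp (hc.trans (EReal.le_coe_toReal ht))) (neg_nonpos.mpr hβ))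

lemma measurable_boltz : Measurable (boltz β) :=
  Measurable.ite measurableSet_eq measurable_const
    (Real.measurable_exp.comp (measurable_ereal_toReal.const_mul _))

lemma boltz_add {a b : EReal} (ha : a ≠ ⊥) (hb : b ≠ ⊥) :
    boltz β (a + b) = boltz β a * boltz β b := by
  induction a <;> induction b <;>
    simp_all [boltz, ← EReal.coe_add, mul_add, ← Real.exp_add, -neg_mul]

lemma sum_ereal_ne_bot {ι : Type*} {s : Finset ι} {f : ι → EReal} (hf : ∀ i ∈ s, f i ≠ ⊥) :
    ∑ i ∈ s, f i ≠ ⊥ :=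
  Finset.sum_induction f (· ≠ ⊥) (fun _ _ ha hb => EReal.add_ne_bot_iff.mpr ⟨ha, hb⟩) (by simp) hf

lemma boltz_sum {ι : Type*} {s : Finset ι} {f : ι → EReal} (hf : ∀ i ∈ s, f i ≠ ⊥) :
    boltz β (∑ i ∈ s, f i) = ∏ i ∈ s, boltz β (f i) := by
  induction s using Finset.cons_induction with
  | empty => simp [boltz_zero]
  | cons a s ha ih =>
    obtain ⟨hfa, hfs⟩ := Finset.forall_mem_cons ha _ |>.mp hf
    rw [Finset.sum_cons, Finset.prod_cons, boltz_add hfa (sum_ereal_ne_bot hfs), ih hfs]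

end Boltzmann

section PairPotential

open scoped NNReal

variable {d : ℕ} {u : (Fin d → ℝ) → EReal} {β B : ℝ}

lemma IsPairPotential.ne_bot (hu : IsPairPotential u) (x : Fin d → ℝ) : u x ≠ ⊥ := by
  obtain ⟨m, hm⟩ := hu.2.2
  exact ((EReal.bot_lt_coe m).trans_le (hm x)).ne'

lemma IsPairPotential.measurable_mayer (hu : IsPairPotential u) : Measurable (mayer β u) :=
  (measurable_boltz.comp hu.1).sub_const 1

lemma IsPairPotential.exists_norm_mayer_le (hu : IsPairPotential u) (hβ : 0 ≤ β) :
    ∃ M : ℝ≥0, ∀ x, ‖mayer β u x‖ ≤ M := by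
  obtain ⟨m, hm⟩ := hu.2.2
  refine ⟨⟨Real.exp (-β * m) + 1, by positivity⟩, fun x => ?_⟩
  calc ‖mayer β u x‖ ≤ ‖boltz β (u x)‖ + ‖(1 : ℝ)‖ := norm_sub_le _ _
    _ ≤ Real.exp (-β * m) + 1 := by
      rw [Real.norm_of_nonneg (boltz_nonneg _), norm_one]
      gcongr
      exact boltz_le_exp hβ (hm x)

lemma ham_eq_sum_sym2 (hu : ∀ x, u (-x) = u x) {n : ℕ} (x : Fin n → Fin d → ℝ) :
    Ham u n x = ∑ q ∈ (Finset.univ : Finset (Fin n)).sym2 with ¬ q.IsDiag,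
      Sym2.lift ⟨fun i j => u (x i - x j), fun i j => by
        simp only [← hu (x i - x j), neg_sub]⟩ q := by
  rw [Finset.sum_sym2_filter_not_isDiag, Ham]
  refine Finset.sum_congr ?_ fun _ _ => rfl
  ext p
  simpa using ne_of_lt

lemma ham_comp_equiv (hu : ∀ x, u (-x) = u x) {k l : ℕ} (e : Fin k ≃ Fin l)
    (x : Fin l → Fin d → ℝ) : Ham u k (x ∘ e) = Ham u l x := by
  rw [ham_eq_sum_sym2 hu, ham_eq_sum_sym2 hu]
  let e₂ : Sym2 (Fin k) ≃ Sym2 (Fin l) :=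
    ⟨Sym2.map e, Sym2.map e.symm, fun q => by simp [Sym2.map_map],
      fun q => by simp [Sym2.map_map]⟩
  refine Finset.sum_equiv e₂ (fun q => ?_) fun q _ => ?_ <;>
    induction q using Sym2.ind <;> simp [e₂]

lemma ham_cons {n : ℕ} (x : Fin d → ℝ) (xs : Fin n → Fin d → ℝ) :
    Ham u (n + 1) (Fin.cons x xs : Fin (n + 1) → Fin d → ℝ) =
      ∑ i, u (x - xs i) + Ham u n xs := by
  simp [Ham, Finset.sum_filter, Fintype.sum_prod_type, Fin.sum_univ_succ]

lemma measurable_ham (hu : Measurable u) (n : ℕ) : Measurable (Ham u n) :=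
  Finset.measurable_fun_sum _ fun _ _ => hu.comp (by fun_prop)

lemma IsStable.boltz_ham_le (hstab : IsStable u B) (hβ : 0 ≤ β) {n : ℕ}
    (x : Fin n → Fin d → ℝ) : boltz β (Ham u n x) ≤ Real.exp (β * B) ^ n := by
  rw [← Real.exp_nat_mul]
  exact (boltz_le_exp hβ (hstab n x)).trans_eq (by ring_nf)

lemma IsPairPotential.boltz_ham_cons (hu : IsPairPotential u) {n : ℕ} (x : Fin d → ℝ)
    (xs : Fin n → Fin d → ℝ) :
    boltz β (Ham u (n + 1) (Fin.cons x xs : Fin (n + 1) → Fin d → ℝ)) =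
      (∏ i, boltz β (u (x - xs i))) * boltz β (Ham u n xs) := by
  have hham : Ham u n xs ≠ ⊥ := sum_ereal_ne_bot fun _ _ => hu.ne_bot _
  rw [ham_cons, boltz_add (sum_ereal_ne_bot fun _ _ => hu.ne_bot _) hham,
    boltz_sum fun _ _ => hu.ne_bot _]

end PairPotential

section Gibbs

open scoped NNReal

variable {d : ℕ} {u : (Fin d → ℝ) → EReal} {β B : ℝ} {z : ℂ}

/-- The grand canonical weight `z ^ k * exp (-β H(y₁, …, y_k))` of a `k`-point configuration. -/
noncomputable def gibbsWeight (β : ℝ) (u : (Fin d → ℝ) → EReal) (z : ℂ) (k : ℕ)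
    (y : Fin k → Fin d → ℝ) : ℂ :=
  z ^ k * (boltz β (Ham u k y) : ℂ)

lemma IsPairPotential.isSymmetricWeight_gibbsWeight (hu : IsPairPotential u) :
    IsSymmetricWeight (gibbsWeight β u z) := by
  intro k l e y
  obtain rfl : k = l := Fin.equiv_iff_eq.mp ⟨e⟩
  rw [gibbsWeight, ham_comp_equiv hu.2.1, gibbsWeight]

lemma measurable_gibbsWeight (hu : Measurable u) (k : ℕ) : Measurable (gibbsWeight β u z k) :=
  (Complex.measurable_ofReal.comp (measurable_boltz.comp (measurable_ham hu k))).const_mul _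

lemma IsStable.norm_gibbsWeight_le (hstab : IsStable u B) (hβ : 0 ≤ β) (k : ℕ)
    (y : Fin k → Fin d → ℝ) :
    ‖gibbsWeight β u z k y‖ ≤ (1 : ℝ≥0) * (‖z‖₊ * (Real.exp (β * B)).toNNReal : ℝ≥0) ^ k := by
  rw [gibbsWeight, norm_mul, norm_pow, Complex.norm_real, Real.norm_of_nonneg (boltz_nonneg _)]
  calc ‖z‖ ^ k * boltz β (Ham u k y) ≤ ‖z‖ ^ k * Real.exp (β * B) ^ k := by
        gcongr; exact hstab.boltz_ham_le hβ y
    _ = _ := by simp [mul_pow, Real.exp_nonneg]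

lemma IsPairPotential.pinned_gibbsWeight_cons (hu : IsPairPotential u) {n k : ℕ} (x : Fin d → ℝ)
    (xs : Fin n → Fin d → ℝ) (y : Fin k → Fin d → ℝ) :
    pinned (gibbsWeight β u z) (Fin.cons x xs : Fin (n + 1) → Fin d → ℝ) k y =
      z * (boltz β (∑ i, u (x - xs i)) : ℂ) *
        ((∏ j, (1 + (mayer β u (x - y j) : ℂ))) * pinned (gibbsWeight β u z) xs k y) := by
  have one_add_mayer (j : Fin k) : 1 + (mayer β u (x - y j) : ℂ) = boltz β (u (x - y j)) := by
    simp [mayer]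
  have isolate_x : pinned (gibbsWeight β u z) (Fin.cons x xs : Fin (n + 1) → Fin d → ℝ) k y =
      gibbsWeight β u z (n + k + 1) (Fin.cons x (Fin.append xs y)) := by
    rw [pinned, Fin.append_cons]
    exact hu.isSymmetricWeight_gibbsWeight (finCongr (Nat.add_right_comm n 1 k)) _
  rw [isolate_x, gibbsWeight, hu.boltz_ham_cons, Fin.prod_univ_add, pinned, gibbsWeight,
    boltz_sum fun _ _ => hu.ne_bot _]
  simp_rw [one_add_mayer, Fin.append_left, Fin.append_right]
  push_cast
  ring

end Gibbs

section KirkwoodSalsburg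

variable {d : ℕ} {u : (Fin d → ℝ) → EReal} {β B : ℝ} {z : ℂ} {Λ : Set (Fin d → ℝ)}

lemma restrict_cube (Λ : Set (Fin d → ℝ)) (k : ℕ) :
    (volume : Measure (Fin k → Fin d → ℝ)).restrict (cube Λ k) =
      Measure.pi fun _ => volume.restrict Λ :=
  Measure.restrict_pi_pi _ _

lemma Xi_eq_lebesguePoissonIntegral :
    Xi β u Λ z = lebesguePoissonIntegral (volume.restrict Λ) (gibbsWeight β u z) := by
  refine tsum_congr fun k => ?_
  simp_rw [lebesguePoissonTerm, gibbsWeight]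
  rw [integral_const_mul, integral_complex_ofReal, restrict_cube]
  ring

lemma theta_eq_lebesguePoissonIntegral {n : ℕ} (x : Fin n → Fin d → ℝ) :
    theta β u Λ n z x = (Xi β u Λ z)⁻¹ *
      lebesguePoissonIntegral (volume.restrict Λ) (pinned (gibbsWeight β u z) x) := by
  refine congrArg _ (tsum_congr fun k => ?_)
  simp_rw [lebesguePoissonTerm, pinned, gibbsWeight]
  rw [integral_const_mul, integral_complex_ofReal, restrict_cube]
  ring

lemma IsPairPotential.theta_append_of_isEmpty_left (hu : IsPairPotential u) {k : ℕ}
    (x : Fin 0 → Fin d → ℝ) (y : Fin k → Fin d → ℝ) :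
    theta β u Λ (0 + k) z (Fin.append x y) = theta β u Λ k z y := by
  have hsymm : IsSymmetricWeight (gibbsWeight β u z) := hu.isSymmetricWeight_gibbsWeight
  simp_rw [theta_eq_lebesguePoissonIntegral, ← hsymm.pinned_pinned, hsymm.pinned_of_isEmpty]

lemma IsPairPotential.theta_zero (hu : IsPairPotential u) (hXi : Xi β u Λ z ≠ 0)
    (x : Fin 0 → Fin d → ℝ) : theta β u Λ 0 z x = 1 := by
  rw [theta_eq_lebesguePoissonIntegral, hu.isSymmetricWeight_gibbsWeight.pinned_of_isEmpty,
    ← Xi_eq_lebesguePoissonIntegral, inv_mul_cancel₀ hXi]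

lemma IsPairPotential.theta_cons (hu : IsPairPotential u) {n : ℕ} (x : Fin d → ℝ)
    (xs : Fin n → Fin d → ℝ) :
    theta β u Λ (n + 1) z (Fin.cons x xs) = z * (boltz β (∑ i, u (x - xs i)) : ℂ) *
      ((Xi β u Λ z)⁻¹ * lebesguePoissonIntegral (volume.restrict Λ) fun k y =>
        (∏ j, (1 + (mayer β u (x - y j) : ℂ))) * pinned (gibbsWeight β u z) xs k y) := by
  have isolate_x := funext₂ fun k y => hu.pinned_gibbsWeight_cons (β := β) (z := z) (k := k) x xs y
  rw [theta_eq_lebesguePoissonIntegral, isolate_x, lebesguePoissonIntegral_const_mul,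
    mul_left_comm]

lemma hasSum_kirkwoodSalsburg (hβ : 0 ≤ β) (hu : IsPairPotential u) (hstab : IsStable u B)
    (hΛ : volume Λ ≠ ⊤) {n : ℕ} (x : Fin d → ℝ) (xs : Fin n → Fin d → ℝ) :
    HasSum (lebesguePoissonTerm (volume.restrict Λ) fun k y =>
        (∏ j, (mayer β u (x - y j) : ℂ)) * theta β u Λ (n + k) z (Fin.append xs y))
      ((Xi β u Λ z)⁻¹ * lebesguePoissonIntegral (volume.restrict Λ) fun k y =>
        (∏ j, (1 + (mayer β u (x - y j) : ℂ))) * pinned (gibbsWeight β u z) xs k y) := by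
  have : IsFiniteMeasure (volume.restrict Λ) := isFiniteMeasure_restrict.mpr hΛ
  have hsymm : IsSymmetricWeight (gibbsWeight β u z) := hu.isSymmetricWeight_gibbsWeight
  obtain ⟨M, hM⟩ := hu.exists_norm_mayer_le hβ
  have expansion := (hasSum_lebesguePoissonIntegral_prod_one_add_mul (volume.restrict Λ)
    (g := fun y => (mayer β u (x - y) : ℂ))
    (Complex.measurable_ofReal.comp (hu.measurable_mayer.comp (measurable_const.sub measurable_id)))
    (fun y => (Complex.norm_real _).trans_le (hM _))
    (measurable_pinned (measurable_gibbsWeight hu.1) xs)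
    (norm_pinned_le (hstab.norm_gibbsWeight_le hβ) xs) (isSymmetricWeight_pinned hsymm xs)).mul_left
      (Xi β u Λ z)⁻¹
  simp_rw [hsymm.pinned_pinned, ← lebesguePoissonTerm_const_mul] at expansion
  simp_rw [theta_eq_lebesguePoissonIntegral, mul_left_comm _ (Xi β u Λ z)⁻¹]
  exact expansion

theorem kirkwoodSalsburg (hβ : 0 ≤ β) (hu : IsPairPotential u) (hstab : IsStable u B)
    (hΛ : volume Λ ≠ ⊤) {n : ℕ} (x : Fin d → ℝ) (xs : Fin n → Fin d → ℝ) :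
    Summable (fun k : ℕ => ‖1 / ((k + 1).factorial : ℂ) * ∫ y in cube Λ (k + 1),
      (∏ j, (mayer β u (x - y j) : ℂ)) * theta β u Λ (n + (k + 1)) z (Fin.append xs y)‖) ∧
    theta β u Λ (n + 1) z (Fin.cons x xs) = z * (boltz β (∑ i, u (x - xs i)) : ℂ) *
      (theta β u Λ n z xs + ∑' k : ℕ, 1 / ((k + 1).factorial : ℂ) * ∫ y in cube Λ (k + 1),
        (∏ j, (mayer β u (x - y j) : ℂ)) * theta β u Λ (n + (k + 1)) z (Fin.append xs y)) := by
  have hsum := hasSum_kirkwoodSalsburg (z := z) hβ hu hstab hΛ x xs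
  simp_rw [restrict_cube]
  refine ⟨((summable_nat_add_iff 1).mpr hsum.summable).norm, ?_⟩
  rw [hu.theta_cons, ← hsum.tsum_eq, hsum.summable.tsum_eq_zero_add, lebesguePoissonTerm_zero]
  simp [Fin.append_elim0, lebesguePoissonTerm]

end KirkwoodSalsburg

theorem statement16_general {d : ℕ} {β B : ℝ} (hβ : 0 ≤ β) {u : (Fin d → ℝ) → EReal}
    (hu : IsPairPotential u) (hstab : IsStable u B) {Λ : Set (Fin d → ℝ)} (hΛ : volume Λ ≠ ⊤)
    {z : ℂ} (hXi : Xi β u Λ z ≠ 0) :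
    (∀ x,
      Summable (fun k : ℕ =>
        ‖(1 / (Nat.factorial (k + 1) : ℂ)) *
          ∫ y in cube Λ (k + 1),
            (∏ j, ((mayer β u (x - y j) : ℝ) : ℂ)) * theta β u Λ (k + 1) z y‖) ∧
      theta β u Λ 1 z (fun _ => x) =
        z * (1 + ∑' k : ℕ, (1 / (Nat.factorial (k + 1) : ℂ)) *
          ∫ y in cube Λ (k + 1),
            (∏ j, ((mayer β u (x - y j) : ℝ) : ℂ)) * theta β u Λ (k + 1) z y)) ∧
    (∀ (n : ℕ) (x : Fin d → ℝ) (xs : Fin n → (Fin d → ℝ)),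
      Summable (fun k : ℕ =>
        ‖(1 / (Nat.factorial (k + 1) : ℂ)) *
          ∫ y in cube Λ (k + 1),
            (∏ j, ((mayer β u (x - y j) : ℝ) : ℂ)) *
              theta β u Λ (n + (k + 1)) z (Fin.append xs y)‖) ∧
      theta β u Λ (n + 1) z (Fin.cons x xs) =
        z * ((boltz β (∑ i, u (x - xs i)) : ℝ) : ℂ) *
          (theta β u Λ n z xs +
            ∑' k : ℕ, (1 / (Nat.factorial (k + 1) : ℂ)) *
              ∫ y in cube Λ (k + 1),
                (∏ j, ((mayer β u (x - y j) : ℝ) : ℂ)) *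
                  theta β u Λ (n + (k + 1)) z (Fin.append xs y))) := by
  refine ⟨fun x => ?_, fun n x xs => kirkwoodSalsburg hβ hu hstab hΛ x xs⟩
  have hcons : (fun _ => x : Fin 1 → Fin d → ℝ) = Fin.cons x Fin.elim0 :=
    funext fun i => by rw [Subsingleton.elim i 0, Fin.cons_zero]
  have hequation := kirkwoodSalsburg (z := z) hβ hu hstab hΛ x Fin.elim0
  simp_rw [hu.theta_append_of_isEmpty_left, hu.theta_zero hXi] at hequation
  simpa [hcons, boltz_zero] using hequation

/-- the family `(θ_Λ^{(n)}(z;·))_{n≥1}` satisfies the finite-volume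
Kirkwood–Salsburg equations, with all series converging absolutely. -/
theorem statement16 {d : ℕ} (hd : 1 ≤ d) (β B : ℝ) (hβ : 0 < β) (hB : 0 ≤ B)
    (u : (Fin d → ℝ) → EReal) (hu : IsPairPotential u)
    (hstab : IsStable u B) (hreg : IsRegularPP β u)
    (Λ : Set (Fin d → ℝ)) (hΛb : IsBounded Λ) (hΛm : MeasurableSet Λ)
    (hXi : ∀ w : ℂ, ‖w‖ * (Real.exp (2 * β * B + 1) * Creg β u) < 1 →
      Xi β u Λ w ≠ 0)
    (z : ℂ) (hz : ‖z‖ * (Real.exp (2 * β * B + 1) * Creg β u) < 1) :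
    (∀ x ∈ Λ,
      Summable (fun k : ℕ =>
        ‖(1 / (Nat.factorial (k + 1) : ℂ)) *
          ∫ y in cube Λ (k + 1),
            (∏ j, ((mayer β u (x - y j) : ℝ) : ℂ)) * theta β u Λ (k + 1) z y‖) ∧
      theta β u Λ 1 z (fun _ => x) =
        z * (1 + ∑' k : ℕ, (1 / (Nat.factorial (k + 1) : ℂ)) *
          ∫ y in cube Λ (k + 1),
            (∏ j, ((mayer β u (x - y j) : ℝ) : ℂ)) * theta β u Λ (k + 1) z y)) ∧
    (∀ (n : ℕ), 1 ≤ n → ∀ x ∈ Λ, ∀ (xs : Fin n → (Fin d → ℝ)), (∀ i, xs i ∈ Λ) →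
      Summable (fun k : ℕ =>
        ‖(1 / (Nat.factorial (k + 1) : ℂ)) *
          ∫ y in cube Λ (k + 1),
            (∏ j, ((mayer β u (x - y j) : ℝ) : ℂ)) *
              theta β u Λ (n + (k + 1)) z (Fin.append xs y)‖) ∧
      theta β u Λ (n + 1) z (Fin.cons x xs) =
        z * ((boltz β (∑ i, u (x - xs i)) : ℝ) : ℂ) *
          (theta β u Λ n z xs +
            ∑' k : ℕ, (1 / (Nat.factorial (k + 1) : ℂ)) *
              ∫ y in cube Λ (k + 1),
                (∏ j, ((mayer β u (x - y j) : ℝ) : ℂ)) *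
                  theta β u Λ (n + (k + 1)) z (Fin.append xs y))) := by
  have equations := statement16_general hβ.le hu hstab hΛb.measure_lt_top.ne (hXi z hz)
  exact ⟨fun x _ => equations.1 x, fun n _ x _ xs _ => equations.2 n x xs⟩
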